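/- Let n ≥ 1, let 1 < p < ∞, let w be a weight on ℝⁿ satisfying the Berezhnoi–Muckenhoupt condition for exponent p, and let C ⊆ ℝⁿ be a nonempty open cone with vertex at the origin. Let a ∈ L^∞(ℝⁿ;ℂ) and suppose there is M ≥ 0 such that ‖F^{-1}(a·Fu)‖_{L^p(ℝⁿ,w)} ≤ M‖u‖_{L^p(ℝⁿ,w)} for all u ∈ L²(ℝⁿ) ∩ L^p(ℝⁿ,w) (i.e., a is a Fourier multiplier on L^p(ℝⁿ,w)). Then ‖a‖_{L^∞(ℝⁿ)} ≤ sup{ ‖W_C(a)u‖_{L^p(C,w)} : u ∈ L²(C) ∩ L^p(C,w), ‖u‖_{L^p(C,w)} ≤ 1 }. -/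

import Mathlib

open MeasureTheory Filter Metric Complex ENNReal NNReal

noncomputable section

abbrev Eucl (n : ℕ) := EuclideanSpace ℝ (Fin n)

/-- The Fourier integral with the convention `(Fu)(ξ) = ∫ u(x) e^{-i x·ξ} dx`. -/
def fourierInt {n : ℕ} (u : Eucl n → ℂ) (ξ : Eucl n) : ℂ :=
  ∫ x : Eucl n, Complex.exp (-(Complex.I * ((inner ℝ x ξ : ℝ) : ℂ))) * u x

/-- The inverse Fourier integral `(F⁻¹u)(x) = (2π)^{-n} ∫ u(ξ) e^{i x·ξ} dξ`. -/
def fourierIntInv {n : ℕ} (u : Eucl n → ℂ) (x : Eucl n) : ℂ :=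
  (((2 * Real.pi) ^ n : ℝ)⁻¹ : ℂ) •
    ∫ ξ : Eucl n, Complex.exp (Complex.I * ((inner ℝ x ξ : ℝ) : ℂ)) * u ξ

/-- A pair consisting of the Fourier–Plancherel transform on `L²(ℝⁿ;ℂ)` and its inverse:
continuous linear maps on `L²` that are mutually inverse and agree with the Fourier
integral (resp. the inverse Fourier integral) on `L¹ ∩ L²`.  Such a pair exists and is
unique by Plancherel's theorem. -/
structure FourierPlancherelPair (n : ℕ) where
  F : Lp ℂ 2 (volume : Measure (Eucl n)) →L[ℂ] Lp ℂ 2 (volume : Measure (Eucl n))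
  Finv : Lp ℂ 2 (volume : Measure (Eucl n)) →L[ℂ] Lp ℂ 2 (volume : Measure (Eucl n))
  inv_comp : ∀ u, Finv (F u) = u
  comp_inv : ∀ u, F (Finv u) = u
  F_int : ∀ (u : Eucl n → ℂ), Integrable u → ∀ (hu2 : MemLp u 2 (volume : Measure (Eucl n))),
    (F (hu2.toLp u) : Eucl n → ℂ) =ᵐ[volume] fourierInt u
  Finv_int : ∀ (u : Eucl n → ℂ), Integrable u → ∀ (hu2 : MemLp u 2 (volume : Measure (Eucl n))),
    (Finv (hu2.toLp u) : Eucl n → ℂ) =ᵐ[volume] fourierIntInv u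

/-- Multiplication by an `L^∞` function as a map on `L²`. -/
def mulOp {n : ℕ} (a : Eucl n → ℂ) (ha : MemLp a ⊤ (volume : Measure (Eucl n)))
    (v : Lp ℂ 2 (volume : Measure (Eucl n))) : Lp ℂ 2 (volume : Measure (Eucl n)) :=
  (((Lp.memLp v).smul ha : MemLp (a • (v : Eucl n → ℂ)) 2 volume)).toLp _

/-- The Wiener–Hopf type operator `W_Ω(a) u = r_Ω F⁻¹ (a · F(e_Ω u))`, realised as a
function on `ℝⁿ` supported in `Ω` (i.e. `e_Ω W_Ω(a) u`). -/
def WOp {n : ℕ} (FP : FourierPlancherelPair n) (a : Eucl n → ℂ)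
    (ha : MemLp a ⊤ (volume : Measure (Eucl n))) (Ω : Set (Eucl n)) (u : Eucl n → ℂ)
    (hu : MemLp (Ω.indicator u) 2 (volume : Measure (Eucl n))) : Eucl n → ℂ :=
  Ω.indicator (FP.Finv (mulOp a ha (FP.F (hu.toLp _))) : Eucl n → ℂ)

/-- The norm of `f` in the weighted Lebesgue space `L^p(ℝⁿ, w)`, i.e.
`(∫ |f(x) w(x)|^p dx)^{1/p}`, computed in `[0,∞]`. -/
def wLpNorm {n : ℕ} (f : Eucl n → ℂ) (p : ℝ) (w : Eucl n → ℝ≥0∞) : ℝ≥0∞ :=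
  (∫⁻ x : Eucl n, (‖f x‖₊ : ℝ≥0∞) ^ p * w x ^ p) ^ (1 / p)

/-- The Berezhnoi–Muckenhoupt condition for a weight `w : ℝⁿ → [0,∞]` and an exponent
`p ∈ (1,∞)` with conjugate exponent `q`:
`sup_B |B|⁻¹ (∫_B w^p)^{1/p} (∫_B w^{-q})^{1/q} < ∞`, the supremum being over all balls. -/
def BMCondition {n : ℕ} (w : Eucl n → ℝ≥0∞) (p q : ℝ) : Prop :=
  ∃ K : ℝ≥0∞, K ≠ ∞ ∧ ∀ (y : Eucl n) (r : ℝ), 0 < r →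
    (volume (ball y r))⁻¹ * (∫⁻ x in ball y r, w x ^ p) ^ (1 / p) *
      (∫⁻ x in ball y r, (w x)⁻¹ ^ q) ^ (1 / q) ≤ K

/-!
At a Lebesgue point `η` of `a`, the wave packet `v(x) = e^{i⟨x, η⟩} φ((x - y) / R)` has Fourier
transform concentrated within `O(1 / R)` of `η`, so `F⁻¹(a · Fv) - a(η) v` is bounded by a constant
`ε_R` that does not depend on `y` and tends to `0` as `R → ∞`. A cone contains a ball `ball y (2R)`
for every `R`, hence the support of such a packet. The sup bound `ε_R` costs at most
`ε_R μ(ball y (2R))^{1/p}` in `L^p(μ)`, where `μ = w^p dx`, while `‖v‖ ≥ μ(ball y R)^{1/p}`; the two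
measures are comparable because Hölder's inequality and the Berezhnoi–Muckenhoupt condition make `μ`
doubling. Letting `R → ∞` gives `|a(η)| ≤ ‖W_C(a)‖`.
-/

open scoped Topology FourierTransform Pointwise

section ApproximateIdentity

variable {E : Type*} [NormedAddCommGroup E] [NormedSpace ℝ E] [FiniteDimensional ℝ E]
  [MeasurableSpace E] [BorelSpace E] {μ : Measure E} [μ.IsAddHaarMeasure]

lemma ae_tendsto_setAverage_closedBall_norm_sub {F : Type*} [NormedAddCommGroup F] {f : E → F}
    (hf : LocallyIntegrable f μ) :
    ∀ᵐ x ∂μ, Tendsto (fun r ↦ ⨍ y in closedBall x r, ‖f y - f x‖ ∂μ) (𝓝[>] 0) (𝓝 0) := by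
  filter_upwards [(Besicovitch.vitaliFamily μ).ae_tendsto_average_norm_sub hf] with x hx
  exact hx.comp (Besicovitch.tendsto_filterAt μ x)

lemma quasiMeasurePreserving_add_smul (x : E) {t : ℝ} (ht : t ≠ 0) :
    Measure.QuasiMeasurePreserving (fun z ↦ x + t • z) μ μ := by
  have dilation : Measure.QuasiMeasurePreserving (fun z : E ↦ t • z) μ μ := by
    refine ⟨measurable_const_smul t, ?_⟩
    rw [Measure.map_addHaar_smul μ ht]
    exact Measure.smul_absolutelyContinuous
  exact (measurePreserving_add_left μ x).quasiMeasurePreserving.comp dilation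

lemma setIntegral_closedBall_comp_add_smul (h : E → ℝ) (x : E) {t r : ℝ} (ht : 0 < t)
    (hr : 0 < r) :
    ∫ z in closedBall 0 r, h (x + t • z) ∂μ =
      μ.real (closedBall 0 r) * ⨍ y in closedBall x (t * r), h y ∂μ := by
  have translate : ∫ z in closedBall 0 (t * r), h (x + z) ∂μ =
      ∫ y in closedBall x (t * r), h y ∂μ := by
    rw [← (measurePreserving_add_left μ x).setIntegral_preimage_emb
      (measurableEmbedding_addLeft x) h, preimage_add_closedBall, sub_self]
  have volume_ratio : μ.real (closedBall x (t * r)) =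
      t ^ Module.finrank ℝ E * μ.real (closedBall 0 r) := by
    rw [measureReal_def, Measure.addHaar_closedBall_mul μ x ht.le hr.le, ENNReal.toReal_mul,
      ENNReal.toReal_ofReal (by positivity), measureReal_def]
  have : μ.real (closedBall (0 : E) r) ≠ 0 :=
    (ENNReal.toReal_pos (measure_closedBall_pos μ 0 hr).ne' measure_closedBall_lt_top.ne).ne'
  rw [Measure.setIntegral_comp_smul_of_pos μ (fun z ↦ h (x + z)) _ ht, smul_closedBall _ _ hr.le,
    smul_zero, Real.norm_of_nonneg ht.le, translate, setAverage_eq, volume_ratio]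
  simp only [smul_eq_mul]
  field_simp

lemma integrable_comp_add_smul_mul {h f : E → ℝ} {B t : ℝ} (hf : Integrable f μ)
    (h_meas : AEStronglyMeasurable h μ) (h_le : ∀ᵐ y ∂μ, |h y| ≤ B) (x : E) (ht : t ≠ 0) :
    Integrable (fun z ↦ h (x + t • z) * f z) μ :=
  hf.bdd_mul (h_meas.comp_quasiMeasurePreserving (quasiMeasurePreserving_add_smul x ht))
    ((quasiMeasurePreserving_add_smul x ht).ae h_le)

variable {h : E → ℝ} {B : ℝ} {x : E} {f : E → ℝ}

lemma tendsto_integral_comp_add_smul_mul_of_hasCompactSupport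
    (h_meas : AEStronglyMeasurable h μ) (h_le : ∀ᵐ y ∂μ, |h y| ≤ B)
    (hx : Tendsto (fun r ↦ ⨍ y in closedBall x r, |h y| ∂μ) (𝓝[>] 0) (𝓝 0))
    (hf : Continuous f) (hf_supp : HasCompactSupport f) :
    Tendsto (fun t : ℝ ↦ ∫ z, h (x + t • z) * f z ∂μ) (𝓝[>] 0) (𝓝 0) := by
  obtain ⟨G, hG⟩ := hf_supp.exists_bound_of_continuous hf
  obtain ⟨r, hr, h_subset⟩ := hf_supp.isCompact.isBounded.subset_closedBall_lt 0 0
  have f_le (z : E) : ‖f z‖ ≤ (closedBall 0 r).indicator (fun _ ↦ G) z := by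
    by_cases hz : z ∈ closedBall 0 r
    · simpa only [Set.indicator_of_mem hz] using hG z
    · simp [hz, image_eq_zero_of_notMem_tsupport fun hz' ↦ hz (h_subset hz')]
  have tendsto_average : Tendsto (fun t ↦ G * (μ.real (closedBall 0 r) *
      ⨍ y in closedBall x (t * r), |h y| ∂μ)) (𝓝[>] 0) (𝓝 0) := by
    have scale : Tendsto (fun t : ℝ ↦ t * r) (𝓝[>] 0) (𝓝[>] 0) :=
      tendsto_nhdsWithin_iff.2 ⟨((continuous_mul_const r).tendsto' 0 0 (zero_mul r)).mono_left
        nhdsWithin_le_nhds, eventually_mem_nhdsWithin.mono fun t ht ↦ mul_pos ht hr⟩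
    simpa using ((hx.comp scale).const_mul (μ.real (closedBall 0 r))).const_mul G
  refine squeeze_zero_norm' ?_ tendsto_average
  filter_upwards [self_mem_nhdsWithin] with t ht
  have bound_integrable : Integrable
      (fun z ↦ |h (x + t • z)| * (closedBall 0 r).indicator (fun _ ↦ G) z) μ :=
    integrable_comp_add_smul_mul (h := fun y ↦ |h y|)
      ((integrable_indicator_iff measurableSet_closedBall).2
        (integrableOn_const measure_closedBall_lt_top.ne)) h_meas.norm
      (by simpa only [abs_abs] using h_le) x (ne_of_gt ht)
  calc ‖∫ z, h (x + t • z) * f z ∂μ‖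
      ≤ ∫ z, |h (x + t • z)| * (closedBall 0 r).indicator (fun _ ↦ G) z ∂μ :=
        norm_integral_le_of_norm_le bound_integrable <| .of_forall fun z ↦ by
          rw [norm_mul, Real.norm_eq_abs (h _)]
          gcongr
          exact f_le z
    _ = ∫ z in closedBall 0 r, |h (x + t • z)| * G ∂μ := by
        rw [← integral_indicator measurableSet_closedBall]
        simp only [Set.indicator_mul_right]
    _ = G * (μ.real (closedBall 0 r) * ⨍ y in closedBall x (t * r), |h y| ∂μ) := by
        rw [integral_mul_const, mul_comm,
          setIntegral_closedBall_comp_add_smul (fun y ↦ |h y|) x ht hr]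

lemma tendsto_integral_comp_add_smul_mul
    (h_meas : AEStronglyMeasurable h μ) (h_le : ∀ᵐ y ∂μ, |h y| ≤ B)
    (hx : Tendsto (fun r ↦ ⨍ y in closedBall x r, |h y| ∂μ) (𝓝[>] 0) (𝓝 0))
    (hf : Integrable f μ) :
    Tendsto (fun t : ℝ ↦ ∫ z, h (x + t • z) * f z ∂μ) (𝓝[>] 0) (𝓝 0) := by
  have B_nonneg : 0 ≤ B := by
    obtain ⟨y, hy⟩ := h_le.exists
    exact (abs_nonneg _).trans hy
  refine Metric.tendsto_nhds.2 fun ε hε ↦ ?_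
  obtain ⟨g, hg_supp, hfg, hg, hg_int⟩ :=
    hf.exists_hasCompactSupport_integral_sub_le (ε := ε / (2 * (B + 1))) (by positivity)
  have g_limit := tendsto_integral_comp_add_smul_mul_of_hasCompactSupport h_meas h_le hx hg hg_supp
  filter_upwards [self_mem_nhdsWithin, Metric.tendsto_nhds.1 g_limit (ε / 2) (half_pos hε)]
    with t ht g_small
  have integral_sub_le : dist (∫ z, h (x + t • z) * f z ∂μ) (∫ z, h (x + t • z) * g z ∂μ) ≤
      B * ∫ z, ‖f z - g z‖ ∂μ := by
    rw [dist_eq_norm, ← integral_sub (integrable_comp_add_smul_mul hf h_meas h_le x (ne_of_gt ht))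
      (integrable_comp_add_smul_mul hg_int h_meas h_le x (ne_of_gt ht)), ← integral_const_mul]
    refine norm_integral_le_of_norm_le ((hf.sub hg_int).norm.const_mul B) ?_
    filter_upwards [(quasiMeasurePreserving_add_smul x (ne_of_gt ht)).ae h_le] with z hz
    rw [← mul_sub, norm_mul, Real.norm_eq_abs (h _)]
    gcongr
  have approx_small : B * ∫ z, ‖f z - g z‖ ∂μ ≤ ε / 2 :=
    calc B * ∫ z, ‖f z - g z‖ ∂μ ≤ (B + 1) * (ε / (2 * (B + 1))) := by gcongr; linarith
      _ = ε / 2 := by field_simp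
  linarith [dist_triangle (∫ z, h (x + t • z) * f z ∂μ) (∫ z, h (x + t • z) * g z ∂μ) 0]

end ApproximateIdentity
section FourierIntegral

variable {n : ℕ}

lemma fourierInt_exp_inner_mul (u : Eucl n → ℂ) (η ξ : Eucl n) :
    fourierInt (fun x ↦ exp (I * (inner ℝ x η : ℝ)) * u x) ξ = fourierInt u (ξ - η) := by
  unfold fourierInt
  congr! 2 with x
  rw [← mul_assoc, ← Complex.exp_add, inner_sub_right]
  push_cast
  ring_nf

lemma fourierInt_comp_sub (u : Eucl n → ℂ) (y ξ : Eucl n) :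
    fourierInt (fun x ↦ u (x - y)) ξ = exp (-(I * (inner ℝ y ξ : ℝ))) * fourierInt u ξ := by
  have translate := integral_sub_right_eq_self (μ := volume)
    (fun z : Eucl n ↦ exp (-(I * (inner ℝ (z + y) ξ : ℝ))) * u z) y
  simp only [sub_add_cancel] at translate
  rw [fourierInt, fourierInt, translate, ← integral_const_mul]
  congr! 2
  rw [← mul_assoc, ← Complex.exp_add, inner_add_left]
  push_cast
  ring_nf

lemma fourierInt_comp_inv_smul (u : Eucl n → ℂ) {R : ℝ} (hR : 0 < R) (ξ : Eucl n) :
    fourierInt (fun x ↦ u (R⁻¹ • x)) ξ = (R : ℂ) ^ n * fourierInt u (R • ξ) := by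
  have rescale := Measure.integral_comp_inv_smul_of_nonneg volume
    (fun z : Eucl n ↦ exp (-(I * (inner ℝ z (R • ξ) : ℝ))) * u z) hR.le
  have inner_rescale (x : Eucl n) : inner ℝ (R⁻¹ • x) (R • ξ) = inner ℝ x ξ := by
    rw [real_inner_smul_left, real_inner_smul_right, inv_mul_cancel_left₀ hR.ne']
  simp only [inner_rescale, finrank_euclideanSpace_fin, Complex.real_smul] at rescale
  rw [fourierInt, fourierInt, rescale, Complex.ofReal_pow]

lemma integrable_fourierInt {v : Eucl n → ℂ} (hv : ContDiff ℝ (⊤ : ℕ∞) v)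
    (hv_supp : HasCompactSupport v) :
    Integrable (fourierInt v) := by
  have fourierInt_eq (ξ : Eucl n) :
      fourierInt v ξ = 𝓕 (hv_supp.toSchwartzMap hv) ((2 * Real.pi)⁻¹ • ξ) := by
    rw [SchwartzMap.fourier_coe, Real.fourier_eq', fourierInt]
    congr! 2 with x
    rw [real_inner_smul_right, smul_eq_mul]
    congr 2
    push_cast
    field_simp [ofReal_ne_zero.2 Real.pi_ne_zero]
  simp_rw [funext fourierInt_eq]
  exact (𝓕 (hv_supp.toSchwartzMap hv)).integrable.comp_smul (by positivity)

lemma integrable_exp_inner_mul {f : Eucl n → ℂ} (hf : Integrable f) (x : Eucl n) :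
    Integrable fun ξ : Eucl n ↦ exp (I * (inner ℝ x ξ : ℝ)) * f ξ :=
  hf.bdd_mul (c := 1) (by fun_prop) (.of_forall fun ξ ↦ (norm_exp_I_mul_ofReal _).le)

lemma fourierIntInv_sub {f g : Eucl n → ℂ} (hf : Integrable f) (hg : Integrable g) :
    fourierIntInv (f - g) = fourierIntInv f - fourierIntInv g := by
  ext x
  simp only [fourierIntInv, Pi.sub_apply, mul_sub, smul_sub,
    integral_sub (integrable_exp_inner_mul hf x) (integrable_exp_inner_mul hg x)]

lemma fourierIntInv_const_smul (c : ℂ) (f : Eucl n → ℂ) :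
    fourierIntInv (c • f) = c • fourierIntInv f := by
  ext x
  simp only [fourierIntInv, Pi.smul_apply, smul_eq_mul, mul_left_comm _ c, integral_const_mul]

lemma norm_fourierIntInv_le (f : Eucl n → ℂ) (x : Eucl n) :
    ‖fourierIntInv f x‖ ≤ ((2 * Real.pi) ^ n)⁻¹ * ∫ ξ, ‖f ξ‖ := by
  rw [fourierIntInv, norm_smul, norm_inv, norm_real, Real.norm_of_nonneg (by positivity)]
  gcongr
  refine (norm_integral_le_integral_norm _).trans_eq (integral_congr_ae <| .of_forall fun ξ ↦ ?_)
  simp only [norm_mul, norm_exp_I_mul_ofReal, one_mul]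

end FourierIntegral

section FourierMultiplier

variable {n : ℕ} {v : Eucl n → ℂ}

lemma memLp_two_fourierInt (FP : FourierPlancherelPair n) (hv : Integrable v)
    (hv2 : MemLp v 2 volume) :
    MemLp (fourierInt v) 2 volume :=
  (Lp.memLp (FP.F (hv2.toLp v))).ae_eq (FP.F_int v hv hv2)

lemma ae_eq_fourierIntInv_fourierInt (FP : FourierPlancherelPair n) (hv : Integrable v)
    (hv2 : MemLp v 2 volume) (hv_fourier : Integrable (fourierInt v)) :
    v =ᵐ[volume] fourierIntInv (fourierInt v) := by
  have hF2 := memLp_two_fourierInt FP hv hv2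
  have F_eq : FP.F (hv2.toLp v) = hF2.toLp (fourierInt v) :=
    Lp.ext ((FP.F_int v hv hv2).trans hF2.coeFn_toLp.symm)
  have inversion := FP.Finv_int _ hv_fourier hF2
  rw [← F_eq, FP.inv_comp] at inversion
  exact hv2.coeFn_toLp.symm.trans inversion

variable (FP : FourierPlancherelPair n) {a : Eucl n → ℂ} (ha : MemLp a ∞ volume)

lemma Finv_mulOp_F_ae_eq (hv : Integrable v) (hv2 : MemLp v 2 volume)
    (hv_fourier : Integrable (fourierInt v)) :
    FP.Finv (mulOp a ha (FP.F (hv2.toLp v))) =ᵐ[volume] fourierIntInv (a • fourierInt v) := by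
  have h2 : MemLp (a • fourierInt v) 2 volume := (memLp_two_fourierInt FP hv hv2).smul ha
  have h1 : Integrable (a • fourierInt v) := hv_fourier.smul_of_top_right ha
  have mulOp_eq : mulOp a ha (FP.F (hv2.toLp v)) = h2.toLp (a • fourierInt v) := by
    rw [mulOp, MemLp.toLp_eq_toLp_iff]
    exact (EventuallyEq.refl _ a).smul (FP.F_int v hv hv2)
  rw [mulOp_eq]
  exact FP.Finv_int _ h1 h2

lemma ae_norm_Finv_mulOp_F_sub_le (hv : Integrable v) (hv2 : MemLp v 2 volume)
    (hv_fourier : Integrable (fourierInt v)) (z : ℂ) :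
    ∀ᵐ x, ‖FP.Finv (mulOp a ha (FP.F (hv2.toLp v))) x - z * v x‖ ≤
      ((2 * Real.pi) ^ n)⁻¹ * ∫ ξ, ‖a ξ - z‖ * ‖fourierInt v ξ‖ := by
  have inverse_sub : fourierIntInv (a • fourierInt v - z • fourierInt v) =
      fourierIntInv (a • fourierInt v) - z • fourierIntInv (fourierInt v) := by
    rw [fourierIntInv_sub (hv_fourier.smul_of_top_right ha) (hv_fourier.smul z),
      fourierIntInv_const_smul]
  filter_upwards [Finv_mulOp_F_ae_eq FP ha hv hv2 hv_fourier,
    ae_eq_fourierIntInv_fourierInt FP hv hv2 hv_fourier] with x multiplier_eq v_eq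
  calc ‖FP.Finv (mulOp a ha (FP.F (hv2.toLp v))) x - z * v x‖
      = ‖fourierIntInv (a • fourierInt v - z • fourierInt v) x‖ := by
        rw [inverse_sub, Pi.sub_apply, Pi.smul_apply, ← multiplier_eq, ← v_eq, smul_eq_mul]
    _ ≤ ((2 * Real.pi) ^ n)⁻¹ * ∫ ξ, ‖(a • fourierInt v - z • fourierInt v) ξ‖ :=
        norm_fourierIntInv_le _ x
    _ = ((2 * Real.pi) ^ n)⁻¹ * ∫ ξ, ‖a ξ - z‖ * ‖fourierInt v ξ‖ := by
        simp only [Pi.sub_apply, Pi.smul_apply', Pi.smul_apply, ← sub_smul, norm_smul]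

end FourierMultiplier

section WienerHopfNorm

variable {n : ℕ} (FP : FourierPlancherelPair n) {a : Eucl n → ℂ} (ha : MemLp a ∞ volume)

lemma mulOp_const_smul (c : ℂ) (v : Lp ℂ 2 (volume : Measure (Eucl n))) :
    mulOp a ha (c • v) = c • mulOp a ha v := by
  unfold mulOp
  rw [← MemLp.toLp_const_smul, MemLp.toLp_eq_toLp_iff]
  filter_upwards [Lp.coeFn_smul c v] with x hx
  simp only [Pi.smul_apply', Pi.smul_apply, hx, smul_comm c]

lemma WOp_const_smul_ae_eq {Ω : Set (Eucl n)} {u : Eucl n → ℂ} (c : ℂ)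
    (hu : MemLp (Ω.indicator u) 2 volume) (hcu : MemLp (Ω.indicator (c • u)) 2 volume) :
    WOp FP a ha Ω (c • u) hcu =ᵐ[volume] c • WOp FP a ha Ω u hu := by
  have toLp_smul : hcu.toLp (Ω.indicator (c • u)) = c • hu.toLp (Ω.indicator u) := by
    rw [← MemLp.toLp_const_smul, MemLp.toLp_eq_toLp_iff]
    exact .of_eq (Set.indicator_const_smul Ω c u)
  unfold WOp
  rw [toLp_smul, map_smul, mulOp_const_smul, map_smul]
  filter_upwards [Lp.coeFn_smul c (FP.Finv (mulOp a ha (FP.F (hu.toLp _))))] with x hx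
  simp only [Set.indicator, hx, Pi.smul_apply, smul_ite, smul_zero]

/-- The norm of the Wiener–Hopf operator `W_Ω(a)`, with domain `L²(Ω) ∩ L^p(Ω, μ)`, as an
operator on `L^p(Ω, μ)`; it is `∞` when the operator is unbounded. -/
def wienerHopfNorm (FP : FourierPlancherelPair n) (a : Eucl n → ℂ) (ha : MemLp a ∞ volume)
    (Ω : Set (Eucl n)) (p : ℝ≥0∞) (μ : Measure (Eucl n)) : ℝ≥0∞ :=
  ⨆ (u : Eucl n → ℂ) (hu : MemLp (Ω.indicator u) 2 volume)
    (_ : eLpNorm (Ω.indicator u) p μ ≤ 1), eLpNorm (WOp FP a ha Ω u hu) p μ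

variable {p : ℝ≥0∞} {μ : Measure (Eucl n)}

lemma eLpNorm_WOp_le (hμ : μ ≪ volume) {Ω : Set (Eucl n)} {u : Eucl n → ℂ}
    (hu : MemLp (Ω.indicator u) 2 volume) (hu_zero : eLpNorm (Ω.indicator u) p μ ≠ 0)
    (hu_top : eLpNorm (Ω.indicator u) p μ ≠ ∞) :
    eLpNorm (WOp FP a ha Ω u hu) p μ ≤
      wienerHopfNorm FP a ha Ω p μ * eLpNorm (Ω.indicator u) p μ := by
  set N := eLpNorm (Ω.indicator u) p μ
  set c : ℂ := (N⁻¹.toReal : ℂ)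
  have enorm_c : ‖c‖ₑ = N⁻¹ := by
    rw [← ofReal_norm, norm_real, Real.norm_of_nonneg toReal_nonneg,
      ofReal_toReal (inv_ne_top.2 hu_zero)]
  have indicator_smul : Ω.indicator (c • u) = c • Ω.indicator u := Set.indicator_const_smul Ω c u
  have hcu : MemLp (Ω.indicator (c • u)) 2 volume := indicator_smul ▸ hu.const_smul c
  have normalized : eLpNorm (Ω.indicator (c • u)) p μ ≤ 1 := by
    rw [indicator_smul, eLpNorm_const_smul, enorm_c,
      ENNReal.inv_mul_cancel hu_zero hu_top]
  rw [← ENNReal.div_le_iff hu_zero hu_top, ENNReal.div_eq_inv_mul, ← enorm_c,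
    ← eLpNorm_const_smul, ← eLpNorm_congr_ae (hμ.ae_le (WOp_const_smul_ae_eq FP ha c hu hcu))]
  exact le_iSup₂_of_le (c • u) hcu (le_iSup_of_le normalized le_rfl)

lemma eLpNorm_indicator_Finv_mulOp_F_sub_le (hμ : μ ≪ volume) (B : Set (Eucl n))
    {v : Eucl n → ℂ} (hv : Integrable v) (hv2 : MemLp v 2 volume)
    (hv_fourier : Integrable (fourierInt v)) (z : ℂ) :
    eLpNorm (B.indicator (⇑(FP.Finv (mulOp a ha (FP.F (hv2.toLp v)))) - z • v)) p μ ≤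
      ENNReal.ofReal (((2 * Real.pi) ^ n)⁻¹ * ∫ ξ, ‖a ξ - z‖ * ‖fourierInt v ξ‖) *
        μ B ^ (1 / p.toReal) := by
  set ε : ℝ := ((2 * Real.pi) ^ n)⁻¹ * ∫ ξ, ‖a ξ - z‖ * ‖fourierInt v ξ‖
  rw [← Real.enorm_of_nonneg (by positivity : 0 ≤ ε)]
  refine (eLpNorm_mono_ae_real ?_).trans (eLpNorm_indicator_const_le ε p)
  filter_upwards [hμ.ae_le (ae_norm_Finv_mulOp_F_sub_le FP ha hv hv2 hv_fourier z)] with x hx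
  by_cases hxB : x ∈ B
  · rwa [Set.indicator_of_mem hxB, Set.indicator_of_mem hxB]
  · simp [hxB]

lemma enorm_mul_eLpNorm_le_eLpNorm_WOp_add (hp : 1 ≤ p) (hμ : μ ≪ volume) {B C : Set (Eucl n)}
    (hB : MeasurableSet B) (hBC : B ⊆ C) {v : Eucl n → ℂ} (hv : Integrable v)
    (hvC : MemLp (C.indicator v) 2 volume) (hv_fourier : Integrable (fourierInt v))
    (hv_supp : Function.support v ⊆ B) (z : ℂ) :
    ‖z‖ₑ * eLpNorm v p μ ≤ eLpNorm (WOp FP a ha C v hvC) p μ +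
      ENNReal.ofReal (((2 * Real.pi) ^ n)⁻¹ * ∫ ξ, ‖a ξ - z‖ * ‖fourierInt v ξ‖) *
        μ B ^ (1 / p.toReal) := by
  have indicator_C : C.indicator v = v := Set.indicator_eq_self.2 (hv_supp.trans hBC)
  have hv2 : MemLp v 2 volume := indicator_C ▸ hvC
  set T : Eucl n → ℂ := ⇑(FP.Finv (mulOp a ha (FP.F (hv2.toLp v))))
  have WOp_eq : WOp FP a ha C v hvC = C.indicator T := by
    simp only [WOp, indicator_C, T]
  have T_meas : AEStronglyMeasurable T μ := (Lp.aestronglyMeasurable _).mono_ac hμ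
  have v_meas : AEStronglyMeasurable v μ := hv.aestronglyMeasurable.mono_ac hμ
  have split : z • v = B.indicator T - B.indicator (T - z • v) := by
    ext x
    by_cases hx : x ∈ B
    · simp [hx]
    · simp [hx, Function.notMem_support.1 fun hx' ↦ hx (hv_supp hx')]
  calc ‖z‖ₑ * eLpNorm v p μ = eLpNorm (B.indicator T - B.indicator (T - z • v)) p μ := by
        rw [← split, eLpNorm_const_smul]
    _ ≤ eLpNorm (B.indicator T) p μ + eLpNorm (B.indicator (T - z • v)) p μ :=
        eLpNorm_sub_le (T_meas.indicator hB) ((T_meas.sub (v_meas.const_smul z)).indicator hB) hp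
    _ ≤ _ := by
        rw [WOp_eq]
        gcongr
        · exact eLpNorm_mono fun x ↦ norm_indicator_le_of_subset hBC T x
        · exact eLpNorm_indicator_Finv_mulOp_F_sub_le FP ha hμ B hv hv2 hv_fourier z

end WienerHopfNorm

section WavePacket

/-- A fixed smooth cutoff, equal to `1` on the unit ball and vanishing outside the ball of
radius `2`; complex-valued because it serves as the profile of `wavePacket`. -/
def cutoff (n : ℕ) (x : Eucl n) : ℂ :=
  ((⟨1, 2, one_pos, one_lt_two⟩ : ContDiffBump (0 : Eucl n)) x : ℝ)

variable {n : ℕ}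

lemma contDiff_cutoff : ContDiff ℝ (⊤ : ℕ∞) (cutoff n) :=
  ofRealCLM.contDiff.comp (ContDiffBump.contDiff _)

lemma cutoff_of_norm_le_one {x : Eucl n} (hx : ‖x‖ ≤ 1) : cutoff n x = 1 := by
  rw [cutoff, ContDiffBump.one_of_mem_closedBall _ (mem_closedBall_zero_iff.2 hx),
    Complex.ofReal_one]

lemma cutoff_of_two_le_norm {x : Eucl n} (hx : 2 ≤ ‖x‖) : cutoff n x = 0 := by
  rw [cutoff, ContDiffBump.zero_of_le_dist _ (by rwa [dist_zero_right]), Complex.ofReal_zero]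

lemma hasCompactSupport_cutoff : HasCompactSupport (cutoff n) :=
  .of_support_subset_isCompact (isCompact_closedBall 0 2) fun _ hx ↦
    mem_closedBall_zero_iff.2 <| le_of_not_ge fun h ↦ hx (cutoff_of_two_le_norm h)

/-- The wave packet `x ↦ e^{i⟨x, η⟩} φ((x - y) / R)` of frequency `η` living at scale `R` around
`y`, where `φ` is `cutoff`. -/
def wavePacket (η y : Eucl n) (R : ℝ) (x : Eucl n) : ℂ :=
  exp (I * (inner ℝ x η : ℝ)) * cutoff n (R⁻¹ • (x - y))

variable {η y : Eucl n} {R : ℝ}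

lemma contDiff_wavePacket : ContDiff ℝ (⊤ : ℕ∞) (wavePacket η y R) := by
  have phase : ContDiff ℝ (⊤ : ℕ∞) fun x : Eucl n ↦ exp (I * (inner ℝ x η : ℝ)) :=
    (contDiff_const.mul (ofRealCLM.contDiff.comp (contDiff_id.inner ℝ contDiff_const))).cexp
  exact phase.mul (contDiff_cutoff.comp ((contDiff_id.sub contDiff_const).const_smul R⁻¹))

lemma support_wavePacket_subset (hR : 0 < R) :
    Function.support (wavePacket η y R) ⊆ ball y (2 * R) := by
  refine Function.support_subset_iff'.2 fun x hx ↦ ?_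
  rw [mem_ball, dist_eq_norm, not_lt] at hx
  rw [wavePacket, cutoff_of_two_le_norm, mul_zero]
  rwa [norm_smul, norm_inv, Real.norm_of_nonneg hR.le, ← div_eq_inv_mul, le_div_iff₀ hR]

lemma norm_wavePacket_of_mem_ball (hR : 0 < R) {x : Eucl n} (hx : x ∈ ball y R) :
    ‖wavePacket η y R x‖ = 1 := by
  rw [mem_ball, dist_eq_norm] at hx
  rw [wavePacket, norm_mul, norm_exp_I_mul_ofReal, cutoff_of_norm_le_one, norm_one, one_mul]
  rw [norm_smul, norm_inv, Real.norm_of_nonneg hR.le, ← div_eq_inv_mul, div_le_one hR]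
  exact hx.le

lemma hasCompactSupport_wavePacket (hR : 0 < R) : HasCompactSupport (wavePacket η y R) :=
  .of_support_subset_isCompact (isCompact_closedBall y (2 * R))
    ((support_wavePacket_subset hR).trans ball_subset_closedBall)

lemma memLp_wavePacket (hR : 0 < R) (p : ℝ≥0∞) (μ : Measure (Eucl n))
    [IsFiniteMeasureOnCompacts μ] : MemLp (wavePacket η y R) p μ :=
  contDiff_wavePacket.continuous.memLp_of_hasCompactSupport (hasCompactSupport_wavePacket hR)

lemma measure_ball_rpow_le_eLpNorm_wavePacket (hR : 0 < R) {p : ℝ≥0∞} (hp : p ≠ 0)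
    {μ : Measure (Eucl n)} (hμ : μ (ball y R) ≠ 0) :
    μ (ball y R) ^ (1 / p.toReal) ≤ eLpNorm (wavePacket η y R) p μ := by
  rw [← one_mul (μ (ball y R) ^ _), ← enorm_one (G := ℂ),
    ← eLpNorm_indicator_const' measurableSet_ball hμ hp]
  refine eLpNorm_mono fun x ↦ ?_
  by_cases hx : x ∈ ball y R
  · rw [Set.indicator_of_mem hx, norm_one, norm_wavePacket_of_mem_ball hR hx]
  · simp [hx]

lemma norm_fourierInt_wavePacket (hR : 0 < R) (ξ : Eucl n) :
    ‖fourierInt (wavePacket η y R) ξ‖ = R ^ n * ‖fourierInt (cutoff n) (R • (ξ - η))‖ := by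
  unfold wavePacket
  rw [fourierInt_exp_inner_mul, fourierInt_comp_sub (fun x ↦ cutoff n (R⁻¹ • x)),
    fourierInt_comp_inv_smul _ hR, norm_mul, norm_mul, norm_pow, norm_real,
    Real.norm_of_nonneg hR.le, ← mul_neg, ← ofReal_neg, norm_exp_I_mul_ofReal, one_mul]

lemma integral_mul_norm_fourierInt_wavePacket (h : Eucl n → ℝ) (hR : 0 < R) :
    ∫ ξ, h ξ * ‖fourierInt (wavePacket η y R) ξ‖ =
      ∫ z, h (η + R⁻¹ • z) * ‖fourierInt (cutoff n) z‖ := by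
  have rescale := Measure.integral_comp_smul_of_nonneg volume
    (fun z : Eucl n ↦ h (η + R⁻¹ • z) * ‖fourierInt (cutoff n) z‖) R (hR := hR.le)
  have translate := integral_sub_right_eq_self (μ := volume)
    (fun ξ : Eucl n ↦ h (η + ξ) * ‖fourierInt (cutoff n) (R • ξ)‖) η
  simp only [inv_smul_smul₀ hR.ne', finrank_euclideanSpace_fin, smul_eq_mul] at rescale
  simp only [add_sub_cancel, rescale] at translate
  simp only [norm_fourierInt_wavePacket hR, mul_left_comm _ (R ^ n), integral_const_mul, translate]
  rw [mul_inv_cancel_left₀ (by positivity)]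

lemma tendsto_integral_norm_sub_mul_norm_fourierInt_wavePacket {a : Eucl n → ℂ}
    (ha : MemLp a ∞ volume)
    (hη : Tendsto (fun r ↦ ⨍ ξ in closedBall η r, ‖a ξ - a η‖) (𝓝[>] 0) (𝓝 0))
    (y : ℝ → Eucl n) :
    Tendsto (fun R ↦ ∫ ξ, ‖a ξ - a η‖ * ‖fourierInt (wavePacket η (y R) R) ξ‖) atTop (𝓝 0) := by
  have bounded : ∀ᵐ ξ, |‖a ξ - a η‖| ≤ lpNorm a ∞ volume + ‖a η‖ := by
    filter_upwards [ae_le_lpNorm_exponent_top ha] with ξ hξ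
    rw [abs_norm]
    exact (norm_sub_le _ _).trans (by gcongr)
  have limit := tendsto_integral_comp_add_smul_mul (h := fun ξ ↦ ‖a ξ - a η‖)
    (ha.1.sub aestronglyMeasurable_const).norm bounded (by simpa only [abs_norm] using hη)
    (integrable_fourierInt contDiff_cutoff hasCompactSupport_cutoff).norm
  refine (limit.comp tendsto_inv_atTop_nhdsGT_zero).congr' ?_
  filter_upwards [eventually_gt_atTop 0] with R hR
  exact (integral_mul_norm_fourierInt_wavePacket (fun ξ ↦ ‖a ξ - a η‖) hR).symm

end WavePacket

section DoublingWeight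

/-- `μ` is doubling: doubling the radius of any ball multiplies its measure by at most a fixed
constant. In contrast to `IsUnifLocDoublingMeasure`, balls of all radii are considered. -/
def IsDoubling {X : Type*} [PseudoMetricSpace X] [MeasurableSpace X] (μ : Measure X) : Prop :=
  ∃ D : ℝ≥0, ∀ x r, 0 < r → μ (ball x (2 * r)) ≤ D * μ (ball x r)

/-- The measure `w^p dx`, for which `L^p(ℝⁿ, w)` is the unweighted Lebesgue space. -/
def weightMeasure {n : ℕ} (w : Eucl n → ℝ≥0∞) (p : ℝ) : Measure (Eucl n) :=
  volume.withDensity fun x ↦ w x ^ p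

lemma measure_le_lintegral_rpow_mul_lintegral_inv_rpow {X : Type*} [MeasurableSpace X]
    {μ : Measure X} {p q : ℝ} (hpq : p.HolderConjugate q) {w : X → ℝ≥0∞}
    (hw_meas : AEMeasurable w μ) (hw : ∀ᵐ x ∂μ, 0 < w x ∧ w x < ∞) :
    μ Set.univ ≤ (∫⁻ x, w x ^ p ∂μ) ^ (1 / p) * (∫⁻ x, (w x)⁻¹ ^ q ∂μ) ^ (1 / q) := by
  calc μ Set.univ = ∫⁻ x, (w * w⁻¹) x ∂μ := by
        rw [← lintegral_one]
        refine lintegral_congr_ae ?_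
        filter_upwards [hw] with x hx
        exact (ENNReal.mul_inv_cancel hx.1.ne' hx.2.ne).symm
    _ ≤ _ := ENNReal.lintegral_mul_le_Lp_mul_Lq μ hpq hw_meas hw_meas.inv

variable {n : ℕ} {w : Eucl n → ℝ≥0∞} {p q : ℝ}

lemma weightMeasure_absolutelyContinuous : weightMeasure w p ≪ volume :=
  withDensity_absolutelyContinuous _ _

lemma wLpNorm_eq_eLpNorm_weightMeasure (hw_meas : Measurable w) (hw : ∀ᵐ x, w x < ∞)
    (hp : 0 < p) (f : Eucl n → ℂ) :
    wLpNorm f p w = eLpNorm f (ENNReal.ofReal p) (weightMeasure w p) := by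
  rw [eLpNorm_eq_lintegral_rpow_enorm_toReal (by simpa) ofReal_ne_top, toReal_ofReal hp.le,
    weightMeasure, lintegral_withDensity_eq_lintegral_mul_non_measurable _
      (hw_meas.pow_const p) (hw.mono fun x hx ↦ rpow_lt_top_of_nonneg hp.le hx.ne), wLpNorm]
  simp only [Pi.mul_apply, mul_comm (w _ ^ p)]
  rfl

lemma isOpenPosMeasure_weightMeasure (hw_meas : Measurable w) (hw : ∀ᵐ x, 0 < w x ∧ w x < ∞) :
    (weightMeasure w p).IsOpenPosMeasure :=
  (withDensity_absolutelyContinuous' (hw_meas.pow_const p).aemeasurable <| hw.mono fun _ hx ↦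
    (ENNReal.rpow_pos hx.1 hx.2.ne).ne').isOpenPosMeasure

lemma BMCondition.exists_lintegral_mul_lintegral_le (hBM : BMCondition w p q) :
    ∃ K : ℝ≥0∞, K ≠ ∞ ∧ ∀ (y : Eucl n) (r : ℝ), 0 < r →
      weightMeasure w p (ball y r) ^ (1 / p) * (∫⁻ x in ball y r, (w x)⁻¹ ^ q) ^ (1 / q) ≤
        K * volume (ball y r) := by
  obtain ⟨K, hK, K_le⟩ := hBM
  refine ⟨K, hK, fun y r hr ↦ ?_⟩
  rw [weightMeasure, withDensity_apply _ measurableSet_ball,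
    ← ENNReal.div_le_iff (measure_ball_pos volume y hr).ne' measure_ball_lt_top.ne,
    ENNReal.div_eq_inv_mul, ← mul_assoc]
  exact K_le y r hr

lemma BMCondition.isLocallyFiniteMeasure_weightMeasure (hBM : BMCondition w p q) (hp : 0 < p)
    (hq : 0 < q) (hw_meas : Measurable w) (hw : ∀ᵐ x, 0 < w x ∧ w x < ∞) :
    IsLocallyFiniteMeasure (weightMeasure w p) := by
  obtain ⟨K, hK, K_le⟩ := hBM.exists_lintegral_mul_lintegral_le
  refine ⟨fun x ↦ ⟨ball x 1, ball_mem_nhds x one_pos, lt_top_iff_ne_top.2 fun h_top ↦ ?_⟩⟩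
  have dual_ne_zero : (∫⁻ x in ball x 1, (w x)⁻¹ ^ q) ^ (1 / q) ≠ 0 := by
    have positive : volume ≪ volume.withDensity fun x ↦ (w x)⁻¹ ^ q :=
      withDensity_absolutelyContinuous' (hw_meas.inv.pow_const q).aemeasurable <|
        hw.mono fun _ hx ↦ (ENNReal.rpow_pos (ENNReal.inv_pos.2 hx.2.ne)
          (ENNReal.inv_ne_top.2 hx.1.ne')).ne'
    rw [← withDensity_apply _ measurableSet_ball, ne_eq,
      ENNReal.rpow_eq_zero_iff_of_pos (by positivity)]
    exact fun h_zero ↦ (measure_ball_pos volume x one_pos).ne' (positive h_zero)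
  have product_le := K_le x 1 one_pos
  rw [h_top, ENNReal.top_rpow_of_pos (by positivity), ENNReal.top_mul dual_ne_zero] at product_le
  exact mul_ne_top hK measure_ball_lt_top.ne (top_le_iff.1 product_le)

lemma BMCondition.isDoubling_weightMeasure (hBM : BMCondition w p q) (hpq : p.HolderConjugate q)
    (hw_meas : Measurable w) (hw : ∀ᵐ x, 0 < w x ∧ w x < ∞) :
    IsDoubling (weightMeasure w p) := by
  obtain ⟨K, hK, K_le⟩ := hBM.exists_lintegral_mul_lintegral_le
  have hp := hpq.pos
  have hq := hpq.symm.pos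
  have constant_ne_top : (K * 2 ^ n) ^ p ≠ ∞ :=
    rpow_ne_top_of_nonneg hp.le (mul_ne_top hK (pow_ne_top ofNat_ne_top))
  refine ⟨((K * 2 ^ n) ^ p).toNNReal, fun y r hr ↦ ?_⟩
  set W : ℝ → ℝ≥0∞ := fun s ↦ weightMeasure w p (ball y s) ^ (1 / p)
  set V : ℝ → ℝ≥0∞ := fun s ↦ (∫⁻ x in ball y s, (w x)⁻¹ ^ q) ^ (1 / q)
  have volume_le : volume (ball y r) ≤ W r * V r := by
    have holder := measure_le_lintegral_rpow_mul_lintegral_inv_rpow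
      (μ := volume.restrict (ball y r)) hpq hw_meas.aemeasurable (ae_restrict_of_ae hw)
    rwa [Measure.restrict_apply_univ, ← withDensity_apply _ measurableSet_ball] at holder
  have V_le : V r ≤ V (2 * r) := by
    dsimp only [V]
    gcongr
    linarith
  have volume_two_mul : volume (ball y (2 * r)) = 2 ^ n * volume (ball y r) := by
    rw [Measure.addHaar_ball_mul_of_pos volume y two_pos, Measure.addHaar_ball_center volume y r]
    simp
  have W_le : W (2 * r) ≤ K * 2 ^ n * W r := by
    refine (ENNReal.mul_le_mul_iff_right (measure_ball_pos volume y hr).ne'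
      measure_ball_lt_top.ne).1 ?_
    calc volume (ball y r) * W (2 * r) ≤ W r * V (2 * r) * W (2 * r) := by
          gcongr
          exact volume_le.trans (by gcongr)
      _ = W r * (W (2 * r) * V (2 * r)) := by ring
      _ ≤ W r * (K * volume (ball y (2 * r))) := by gcongr W r * ?_; exact K_le y _ (by positivity)
      _ = volume (ball y r) * (K * 2 ^ n * W r) := by rw [volume_two_mul]; ring
  rw [coe_toNNReal constant_ne_top, ← ENNReal.rpow_le_rpow_iff (z := 1 / p) (by positivity),
    ENNReal.mul_rpow_of_nonneg _ _ (by positivity), one_div, ENNReal.rpow_rpow_inv hp.ne',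
    ← one_div]
  exact W_le

end DoublingWeight

section LargeBalls

lemma exists_ball_subset_of_forall_smul_mem {E : Type*} [NormedAddCommGroup E] [NormedSpace ℝ E]
    {C : Set E} (hC_open : IsOpen C) (hC_nonempty : C.Nonempty)
    (hC_cone : ∀ x ∈ C, ∀ t : ℝ, 0 < t → t • x ∈ C) {R : ℝ} (hR : 0 < R) :
    ∃ y, ball y R ⊆ C := by
  obtain ⟨x, hx⟩ := hC_nonempty
  obtain ⟨r, hr, ball_subset⟩ := Metric.isOpen_iff.1 hC_open x hx
  have scale_pos : 0 < R / r := by positivity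
  have ball_eq : ball ((R / r) • x) R = (R / r) • ball x r := by
    rw [_root_.smul_ball scale_pos.ne', Real.norm_of_nonneg scale_pos.le,
      div_mul_cancel₀ R hr.ne']
  refine ⟨(R / r) • x, ?_⟩
  rw [ball_eq]
  rintro _ ⟨z, hz, rfl⟩
  exact hC_cone z (ball_subset hz) _ scale_pos

end LargeBalls

section LowerBound

variable {n : ℕ} (FP : FourierPlancherelPair n) {a : Eucl n → ℂ} (ha : MemLp a ∞ volume)
  {p : ℝ≥0∞} {μ : Measure (Eucl n)} [μ.IsOpenPosMeasure] [IsLocallyFiniteMeasure μ]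

lemma enorm_le_wienerHopfNorm_add (hp : 1 ≤ p) (hμ : μ ≪ volume) {D : ℝ≥0}
    (hD : ∀ x r, 0 < r → μ (ball x (2 * r)) ≤ D * μ (ball x r)) {C : Set (Eucl n)} {y : Eucl n}
    {R : ℝ} (hR : 0 < R) (hC : ball y (2 * R) ⊆ C) (η : Eucl n) (z : ℂ) :
    ‖z‖ₑ ≤ wienerHopfNorm FP a ha C p μ + ENNReal.ofReal
      (((2 * Real.pi) ^ n)⁻¹ * ∫ ξ, ‖a ξ - z‖ * ‖fourierInt (wavePacket η y R) ξ‖) *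
        D ^ (1 / p.toReal) := by
  set v := wavePacket η y R
  set ε := ENNReal.ofReal (((2 * Real.pi) ^ n)⁻¹ * ∫ ξ, ‖a ξ - z‖ * ‖fourierInt v ξ‖)
  have v_supp : Function.support v ⊆ ball y (2 * R) := support_wavePacket_subset hR
  have indicator_C : C.indicator v = v := Set.indicator_eq_self.2 (v_supp.trans hC)
  have hvC : MemLp (C.indicator v) 2 volume := indicator_C.symm ▸ memLp_wavePacket hR 2 volume
  have ball_le : μ (ball y R) ^ (1 / p.toReal) ≤ eLpNorm v p μ :=
    measure_ball_rpow_le_eLpNorm_wavePacket hR (one_pos.trans_le hp).ne'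
      (measure_ball_pos μ y hR).ne'
  have v_ne_zero : eLpNorm v p μ ≠ 0 :=
    ((ENNReal.rpow_pos (measure_ball_pos μ y hR) measure_ball_lt_top.ne).trans_le ball_le).ne'
  have v_ne_top : eLpNorm v p μ ≠ ∞ := (memLp_wavePacket hR p μ).eLpNorm_ne_top
  have WOp_le := eLpNorm_WOp_le FP ha (p := p) hμ hvC
    (by rwa [indicator_C]) (by rwa [indicator_C])
  rw [indicator_C] at WOp_le
  have doubling : μ (ball y (2 * R)) ^ (1 / p.toReal) ≤ D ^ (1 / p.toReal) * eLpNorm v p μ := by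
    grw [hD y R hR, ENNReal.mul_rpow_of_nonneg _ _ (by positivity), ball_le]
  refine (ENNReal.mul_le_mul_iff_left v_ne_zero v_ne_top).1 ?_
  calc ‖z‖ₑ * eLpNorm v p μ
      ≤ eLpNorm (WOp FP a ha C v hvC) p μ + ε * μ (ball y (2 * R)) ^ (1 / p.toReal) :=
        enorm_mul_eLpNorm_le_eLpNorm_WOp_add FP ha hp hμ measurableSet_ball hC
          (memLp_one_iff_integrable.1 (memLp_wavePacket hR 1 volume)) hvC
          (integrable_fourierInt contDiff_wavePacket (hasCompactSupport_wavePacket hR)) v_supp z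
    _ ≤ wienerHopfNorm FP a ha C p μ * eLpNorm v p μ +
          ε * (D ^ (1 / p.toReal) * eLpNorm v p μ) := by gcongr
    _ = (wienerHopfNorm FP a ha C p μ + ε * D ^ (1 / p.toReal)) * eLpNorm v p μ := by ring

theorem weighted_norm_lower_bound_general (hp : 1 ≤ p) (hμ : μ ≪ volume)
    (hμ_doubling : IsDoubling μ) {C : Set (Eucl n)} (hC : ∀ R > 0, ∃ y, ball y R ⊆ C) :
    eLpNorm a ∞ volume ≤ wienerHopfNorm FP a ha C p μ := by
  obtain ⟨D, hD⟩ := hμ_doubling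
  choose! y hy using hC
  rw [eLpNorm_exponent_top]
  refine eLpNormEssSup_le_of_ae_enorm_bound ?_
  filter_upwards [ae_tendsto_setAverage_closedBall_norm_sub (ha.locallyIntegrable le_top)]
    with η lebesgue_point
  have error_tendsto := tendsto_integral_norm_sub_mul_norm_fourierInt_wavePacket ha lebesgue_point
    fun R ↦ y (2 * R)
  have bound_tendsto := (ENNReal.Tendsto.mul_const (b := (D : ℝ≥0∞) ^ (1 / p.toReal))
    (ENNReal.tendsto_ofReal (error_tendsto.const_mul ((2 * Real.pi) ^ n)⁻¹))
    (.inr <| rpow_ne_top_of_nonneg (by positivity) coe_ne_top)).const_add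
      (wienerHopfNorm FP a ha C p μ)
  rw [mul_zero, ENNReal.ofReal_zero, zero_mul, add_zero] at bound_tendsto
  refine ge_of_tendsto bound_tendsto ?_
  filter_upwards [eventually_gt_atTop 0] with R hR
  exact enorm_le_wienerHopfNorm_add FP ha hp hμ hD hR (hy _ (by positivity)) η (a η)

end LowerBound

/-- lower bound for the norm of a Wiener–Hopf type operator on the weighted
Lebesgue space `L^p(C, w)` over an open cone `C`, for a weight `w` satisfying the
Berezhnoi–Muckenhoupt condition. -/
theorem weighted_norm_lower_bound (n : ℕ) (hn : 1 ≤ n) (p q : ℝ) (hp : 1 < p)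
    (hpq : 1 / p + 1 / q = 1) (w : Eucl n → ℝ≥0∞) (hwmeas : Measurable w)
    (hw : ∀ᵐ x : Eucl n, 0 < w x ∧ w x < ∞) (hBM : BMCondition w p q)
    (C : Set (Eucl n)) (hCopen : IsOpen C) (hCne : C.Nonempty)
    (hcone : ∀ x ∈ C, ∀ α : ℝ, 0 < α → α • x ∈ C)
    (a : Eucl n → ℂ) (ha : MemLp a ⊤ (volume : Measure (Eucl n)))
    (FP : FourierPlancherelPair n) (M : ℝ) (hM0 : 0 ≤ M)
    (hM : ∀ (u : Eucl n → ℂ) (hu2 : MemLp u 2 (volume : Measure (Eucl n))),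
      wLpNorm u p w < ∞ →
      wLpNorm (FP.Finv (mulOp a ha (FP.F (hu2.toLp u))) : Eucl n → ℂ) p w
        ≤ ENNReal.ofReal M * wLpNorm u p w) :
    eLpNorm a ⊤ volume ≤
      sSup { t : ℝ≥0∞ |
        ∃ (u : Eucl n → ℂ) (hu2 : MemLp (C.indicator u) 2 (volume : Measure (Eucl n))),
          wLpNorm (C.indicator u) p w < ∞ ∧ wLpNorm (C.indicator u) p w ≤ 1 ∧
          t = wLpNorm (WOp FP a ha C u hu2) p w } := by
  have hpq' : p.HolderConjugate q := Real.holderConjugate_iff.2 ⟨hp, by simpa using hpq⟩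
  have := isOpenPosMeasure_weightMeasure (p := p) hwmeas hw
  have := hBM.isLocallyFiniteMeasure_weightMeasure hpq'.pos hpq'.symm.pos hwmeas hw
  simp only [wLpNorm_eq_eLpNorm_weightMeasure hwmeas (hw.mono fun _ hx ↦ hx.2) hpq'.pos]
  have lower_bound := weighted_norm_lower_bound_general FP ha (one_le_ofReal.2 hp.le)
    weightMeasure_absolutelyContinuous (hBM.isDoubling_weightMeasure hpq' hwmeas hw)
    fun _ hR ↦ exists_ball_subset_of_forall_smul_mem hCopen hCne hcone hR
  exact lower_bound.trans <| iSup₂_le fun u hu ↦ iSup_le fun hu_le ↦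
    le_sSup ⟨u, hu, hu_le.trans_lt one_lt_top, hu_le, rfl⟩

end
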